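/- Realizability criterion (surjectivity of the map from P-graphs to P_k-graphs): Let n ∈ ℕ, k : {1, …, n} → ℕ with s_v := #{i : k_i = v}, and let M be a finite multiset of unordered pairs of natural numbers. Then C_M(k) > 0 if and only if l_v(M) ≤ s_v for every v ∈ ℕ; that is, there exists a set of pairwise disjoint 2-element subsets of {1, …, n} whose multiset of k-value-pairs equals M exactly when, for each value v, the total number of occurrences of v in M does not exceed the number of indices i with k_i = v. -/

import Mathlib

/-!
The inequalities `l_v(M) ≤ s_v` for all `v` say exactly that the multiset of all entries of `M`
is contained in the multiset of values `k 1, …, k n` (`forall_lv_le_iff`).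

If the pairs `P_1, …, P_m` realize `M`, then, being disjoint, they have a union inside
`{1, …, n}` whose multiset of values consists of all entries of `M`, so the containment holds.
Conversely, every submultiset of the values on a finite set is the multiset of values on some
subset (`exists_subset_map_val_eq`). Hence, given the containment, the elements of `M` can be
realized greedily one at a time, each on the indices still unused
(`exists_disjoint_realization`).
-/

open scoped Classical BigOperators

noncomputable section

/-- `l_v(M)`: total number of occurrences of the value `v` among the entries of the
elements of the multiset `M` of unordered pairs, counted with multiplicity. -/
def lv (M : Multiset (Multiset ℕ)) (v : ℕ) : ℕ := (M.bind id).count v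

/-- `d(M)`: the number of elements of `M` of the form `{v, v}`, counted with
multiplicity. -/
def dM (M : Multiset (Multiset ℕ)) : ℕ := M.countP (fun e => e.toFinset.card = 1)

/-- `C_M(k)`: the number of sets of pairwise disjoint 2-element subsets of
`{1, …, n}` whose multiset of `k`-value-pairs equals `M`. -/
def CM (n : ℕ) (k : ℕ → ℕ) (M : Multiset (Multiset ℕ)) : ℕ :=
  (((Finset.Icc 1 n).powerset.powerset).filter
    (fun A : Finset (Finset ℕ) =>
      (∀ a ∈ A, a.card = 2) ∧
      (∀ a ∈ A, ∀ b ∈ A, a ≠ b → Disjoint a b) ∧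
      A.val.map (fun a => a.val.map k) = M)).card

end

/-- The inequalities `l_v(M) ≤ s_v`, one for each value, amount to a single containment of
multisets. -/
lemma forall_lv_le_iff (S : Finset ℕ) (k : ℕ → ℕ) (M : Multiset (Multiset ℕ)) :
    (∀ v, lv M v ≤ (S.filter (fun i => k i = v)).card) ↔ M.bind id ≤ S.val.map k := by
  rw [Multiset.le_iff_count]
  refine forall_congr' fun v => ?_
  rw [Multiset.count_map, lv, Finset.card_def, Finset.filter_val]
  simp only [eq_comm]

/-- A submultiset of the values of `k` on `S` is the multiset of values of `k` on a subset
of `S`. -/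
lemma exists_subset_map_val_eq (k : ℕ → ℕ) (e : Multiset ℕ) :
    ∀ S : Finset ℕ, e ≤ S.val.map k → ∃ P ⊆ S, P.val.map k = e := by
  induction e using Multiset.induction with
  | empty => exact fun S _ => ⟨∅, by simp, by simp⟩
  | cons v e ih =>
    intro S h
    obtain ⟨i, hi, rfl⟩ := Multiset.mem_map.1 (Multiset.mem_of_le h (Multiset.mem_cons_self v e))
    have hS : S.val.map k = k i ::ₘ (S.erase i).val.map k := by
      rw [← Multiset.map_cons, Finset.erase_val, Multiset.cons_erase hi]
    rw [hS, Multiset.cons_le_cons_iff] at h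
    obtain ⟨P, hP, rfl⟩ := ih _ h
    have hiP : i ∉ P := fun hm => Finset.notMem_erase i S (hP hm)
    refine ⟨insert i P, Finset.insert_subset hi (hP.trans (Finset.erase_subset _ _)), ?_⟩
    rw [Finset.insert_val_of_notMem hiP, Multiset.map_cons]

/-- Pairs whose entries all fit into the values of `k` on `S` can be realized simultaneously by
pairwise disjoint subsets of `S`: realize one pair on `P ⊆ S` and the others on `S \ P`. -/
lemma exists_disjoint_realization (k : ℕ → ℕ) (M : Multiset (Multiset ℕ))
    (hM : ∀ e ∈ M, Multiset.card e = 2) :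
    ∀ S : Finset ℕ, M.bind id ≤ S.val.map k → ∃ A : Finset (Finset ℕ),
      (∀ a ∈ A, a ⊆ S) ∧ (∀ a ∈ A, ∀ b ∈ A, a ≠ b → Disjoint a b) ∧
      A.val.map (fun a => a.val.map k) = M := by
  induction M using Multiset.induction with
  | empty => exact fun S _ => ⟨∅, by simp, by simp, by simp⟩
  | cons e M ih =>
    intro S h
    rw [Multiset.cons_bind, id] at h
    obtain ⟨P, hPS, rfl⟩ :=
      exists_subset_map_val_eq k e S ((Multiset.le_add_right _ _).trans h)
    have hS : S.val.map k = P.val.map k + (S \ P).val.map k := by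
      rw [← Multiset.map_add, Finset.sdiff_val,
        add_tsub_cancel_of_le (Finset.val_le_iff.2 hPS)]
    rw [hS] at h
    obtain ⟨A, hA, hd, rfl⟩ := ih (fun e he => hM e (Multiset.mem_cons_of_mem he)) (S \ P)
      (Multiset.le_of_add_le_add_left h)
    have hPd : ∀ a ∈ A, Disjoint P a := fun a ha =>
      Finset.disjoint_sdiff.mono_right (hA a ha)
    -- `P` is nonempty, so it is not one of the sets in `A`, all of which are disjoint from it.
    have hPA : P ∉ A := fun hm => by
      have h2 := hM _ (Multiset.mem_cons_self _ _)
      have h0 : P = ∅ := disjoint_self.1 (hPd P hm)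
      simp [h0] at h2
    refine ⟨insert P A, ?_, ?_, ?_⟩
    · intro a ha
      rcases Finset.mem_insert.1 ha with rfl | ha
      · exact hPS
      · exact (hA a ha).trans Finset.sdiff_subset
    · intro a ha b hb hab
      rcases Finset.mem_insert.1 ha with rfl | ha' <;>
        rcases Finset.mem_insert.1 hb with rfl | hb'
      · exact absurd rfl hab
      · exact hPd b hb'
      · exact (hPd a ha').symm
      · exact hd a ha' b hb' hab
    · rw [Finset.insert_val_of_notMem hPA, Multiset.map_cons]

theorem CM_pos_iff
    (n : ℕ) (k : ℕ → ℕ) (s : ℕ → ℕ)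
    (hs : ∀ v, s v = ((Finset.Icc 1 n).filter (fun i => k i = v)).card)
    (M : Multiset (Multiset ℕ)) (hM : ∀ e ∈ M, Multiset.card e = 2) :
    0 < CM n k M ↔ ∀ v, lv M v ≤ s v := by
  simp only [hs]
  rw [forall_lv_le_iff, CM, Finset.card_pos]
  constructor
  · rintro ⟨A, hA⟩
    obtain ⟨hAS, -, hd, rfl⟩ := Finset.mem_filter.1 hA
    have hU : A.disjiUnion id (fun a ha b hb hab => hd a ha b hb hab) ⊆ Finset.Icc 1 n := by
      intro i hi
      obtain ⟨a, ha, hia⟩ := Finset.mem_disjiUnion.1 hi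
      exact Finset.mem_powerset.1 (Finset.mem_powerset.1 hAS ha) hia
    have hle := Multiset.map_le_map (f := k) (Finset.val_le_iff.2 hU)
    change (A.val.bind fun a => a.val).map k ≤ _ at hle
    rw [Multiset.map_bind] at hle
    rw [Multiset.bind_map]
    exact hle
  · intro h
    obtain ⟨A, hA, hd, rfl⟩ := exists_disjoint_realization k M hM _ h
    refine ⟨A, Finset.mem_filter.2 ⟨Finset.mem_powerset.2 fun a ha =>
      Finset.mem_powerset.2 (hA a ha), fun a ha => ?_, hd, rfl⟩⟩
    have h2 := hM _ (Multiset.mem_map_of_mem _ ha)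
    rwa [Multiset.card_map] at h2
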